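/- Error bound for uniform-sampling based least-squares regression: Let X ∈ ℝ^{n×d} (n ≥ d ≥ 2, rank(X) = d) with coherence μ, let y ∈ ℝ^n, and let β_lsr = (XᵀX)⁻¹Xᵀy. Suppose 1000·μ·d·(ln d + 7) ≤ c ≤ n, and let C be a uniformly distributed random c-element subset of {1, …, n}. Then with probability at least 0.05, every minimizer β̃ of the sampled objective β ↦ Σ_{i∈C} (y_i − x^(i)β)² satisfies both ‖y − Xβ̃‖₂² ≤ 2.2·‖y − Xβ_lsr‖₂² and ‖β_lsr − β̃‖₂² ≤ (1.2/σ_min²(X))·‖y − Xβ_lsr‖₂². Moreover, if γ ∈ (0, 1] satisfies ‖UUᵀy‖₂ ≥ γ‖y‖₂, then also ‖β_lsr − β̃‖₂² ≤ 1.2·κ²(X)·(γ⁻² − 1)·‖β_lsr‖₂². -/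

import Mathlib

open Matrix BigOperators
open scoped Classical

/-- Euclidean norm of a real vector. -/
noncomputable def vnorm {m : ℕ} (v : Fin m → ℝ) : ℝ := Real.sqrt (∑ i, v i ^ 2)

/-- Smallest singular value of a real matrix: `min_{‖v‖=1} ‖Xv‖`. -/
noncomputable def sigmaMin {n d : ℕ} (X : Matrix (Fin n) (Fin d) ℝ) : ℝ :=
  sInf {r : ℝ | ∃ v : Fin d → ℝ, vnorm v = 1 ∧ r = vnorm (X.mulVec v)}

/-- Largest singular value of a real matrix: `max_{‖v‖=1} ‖Xv‖`. -/
noncomputable def sigmaMax {n d : ℕ} (X : Matrix (Fin n) (Fin d) ℝ) : ℝ :=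
  sSup {r : ℝ | ∃ v : Fin d → ℝ, vnorm v = 1 ∧ r = vnorm (X.mulVec v)}

theorem trace_mul_pow_comm {m : Type*} [Fintype m] [DecidableEq m] (P Q : Matrix m m ℝ) (k : ℕ) :
    ((P * Q) ^ k).trace = ((Q * P) ^ k).trace := by
  cases k with
  | zero => simp
  | succ k =>
    rw [pow_succ, ← mul_assoc, mul_pow_mul, mul_assoc, Matrix.trace_mul_comm, mul_assoc,
      ← pow_succ]

theorem two_mul_trace_mul_le {m : Type*} [Fintype m] [DecidableEq m] {A B : Matrix m m ℝ}
    (hA : A.IsHermitian) (hB : B.IsHermitian) :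
    2 * (A * B).trace ≤ (A ^ 2).trace + (B ^ 2).trace := by
  have h := (Matrix.posSemidef_conjTranspose_mul_self (A - B)).trace_nonneg
  rw [Matrix.conjTranspose_sub, hA.eq, hB.eq, sub_mul, mul_sub, mul_sub] at h
  simp only [Matrix.trace_sub] at h
  rw [Matrix.trace_mul_comm B A] at h
  rw [pow_two, pow_two]
  linarith

theorem trace_pow_two_le {m : Type*} [Fintype m] [DecidableEq m] (X : Matrix m m ℝ) :
    (X ^ 2).trace ≤ (X * Xᴴ).trace := by
  have h := (Matrix.posSemidef_conjTranspose_mul_self (X - Xᴴ)).trace_nonneg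
  rw [Matrix.conjTranspose_sub, Matrix.conjTranspose_conjTranspose, sub_mul, mul_sub, mul_sub] at h
  simp only [Matrix.trace_sub] at h
  have h1 : (Xᴴ * Xᴴ).trace = (X * X).trace := by
    rw [← Matrix.conjTranspose_mul, Matrix.trace_conjTranspose]; simp
  rw [Matrix.trace_mul_comm Xᴴ X, h1] at h
  rw [pow_two]
  linarith

theorem trace_pow_two_pow_le_and_trace_mul_pow_le {m : Type*} [Fintype m] [DecidableEq m] (k : ℕ) :
    (∀ X : Matrix m m ℝ, (X ^ 2 ^ (k + 1)).trace ≤ ((X * Xᴴ) ^ 2 ^ k).trace) ∧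
    ∀ A B : Matrix m m ℝ, A.IsHermitian → B.IsHermitian →
      ((A * B) ^ 2 ^ k).trace ≤ (A ^ 2 ^ k * B ^ 2 ^ k).trace := by
  induction k with
  | zero =>
    refine ⟨fun X => ?_, fun A B _ _ => ?_⟩
    · simpa using trace_pow_two_le X
    · simp
  | succ k ih =>
    obtain ⟨ihX, ihAB⟩ := ih
    refine ⟨fun X => ?_, fun A B hA hB => ?_⟩
    · have hl : (X * Xᴴ).IsHermitian := Matrix.isHermitian_mul_conjTranspose_self X
      have hr : (Xᴴ * X).IsHermitian := Matrix.isHermitian_conjTranspose_mul_self X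
      have h1 := ihX (X ^ 2)
      rw [← pow_mul, ← pow_succ'] at h1
      have h2 : X ^ 2 * (X ^ 2)ᴴ = X * (X * Xᴴ * Xᴴ) := by
        rw [pow_two, Matrix.conjTranspose_mul]; simp only [mul_assoc]
      rw [h2, trace_mul_pow_comm, mul_assoc (X * Xᴴ) Xᴴ X] at h1
      have h3 := ihAB _ _ hl hr
      have h4 := two_mul_trace_mul_le (hl.pow (2 ^ k)) (hr.pow (2 ^ k))
      rw [← pow_mul, ← pow_mul, ← pow_succ, trace_mul_pow_comm Xᴴ X] at h4
      linarith
    · have h1 := ihX (A * B)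
      have h2 : A * B * (A * B)ᴴ = A * (B * B * A) := by
        rw [Matrix.conjTranspose_mul, hA.eq, hB.eq]; simp only [mul_assoc]
      rw [h2, trace_mul_pow_comm A (B * B * A), mul_assoc (B * B) A A, trace_mul_pow_comm (B * B)] at h1
      have h3 := ihAB _ _ (hA.pow 2) (hB.pow 2)
      rw [← pow_mul, ← pow_mul, ← pow_succ', pow_two, pow_two] at h3
      exact h1.trans h3

/-- The Araki–Lieb–Thirring inequality for exponents that are powers of two. -/
theorem trace_mul_pow_two_pow_le {m : Type*} [Fintype m] [DecidableEq m] {A B : Matrix m m ℝ}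
    (hA : A.IsHermitian) (hB : B.IsHermitian) (k : ℕ) :
    ((A * B) ^ 2 ^ k).trace ≤ (A ^ 2 ^ k * B ^ 2 ^ k).trace :=
  (trace_pow_two_pow_le_and_trace_mul_pow_le k).2 A B hA hB

theorem exists_diagonalization {m : Type*} [Fintype m] [DecidableEq m] {A : Matrix m m ℝ}
    (hA : A.IsHermitian) :
    ∃ (O : Matrix m m ℝ) (v : m → ℝ), Oᴴ * O = 1 ∧ O * Oᴴ = 1 ∧
      A = O * Matrix.diagonal v * Oᴴ := by
  refine ⟨hA.eigenvectorUnitary, hA.eigenvalues, ?_, ?_, ?_⟩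
  · exact Unitary.coe_star_mul_self hA.eigenvectorUnitary
  · exact Unitary.coe_mul_star_self hA.eigenvectorUnitary
  · conv_lhs => rw [hA.spectral_theorem, Unitary.conjStarAlgAut_apply]
    rfl

theorem diagonal_nonneg_of_posSemidef_conj {m : Type*} [Fintype m] [DecidableEq m]
    {O : Matrix m m ℝ} {v : m → ℝ} (hO : Oᴴ * O = 1)
    (h : (O * Matrix.diagonal v * Oᴴ).PosSemidef) (i : m) : 0 ≤ v i := by
  have h1 := h.conjTranspose_mul_mul_same O
  have h2 : Oᴴ * (O * Matrix.diagonal v * Oᴴ) * O = Matrix.diagonal v := by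
    calc _ = (Oᴴ * O) * Matrix.diagonal v * (Oᴴ * O) := by simp only [mul_assoc]
      _ = _ := by rw [hO]; simp
  rw [h2, Matrix.posSemidef_diagonal_iff] at h1
  exact h1 i

theorem conj_mul_conj {m : Type*} [Fintype m] [DecidableEq m] {O : Matrix m m ℝ}
    (hO : Oᴴ * O = 1) (D E : Matrix m m ℝ) :
    (O * D * Oᴴ) * (O * E * Oᴴ) = O * (D * E) * Oᴴ := by
  calc _ = O * D * (Oᴴ * O) * E * Oᴴ := by simp only [mul_assoc]
    _ = _ := by rw [hO]; simp [mul_assoc]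

theorem conj_matrix_pow {m : Type*} [Fintype m] [DecidableEq m] {O : Matrix m m ℝ}
    (hO : Oᴴ * O = 1) (hO' : O * Oᴴ = 1) (D : Matrix m m ℝ) (k : ℕ) :
    (O * D * Oᴴ) ^ k = O * D ^ k * Oᴴ := by
  induction k with
  | zero => simp [hO', -Matrix.conjTranspose_eq_transpose_of_trivial]
  | succ k ih => rw [pow_succ, ih, conj_mul_conj hO, pow_succ]

theorem one_eq_conj {m : Type*} [Fintype m] [DecidableEq m] {O : Matrix m m ℝ}
    (hO' : O * Oᴴ = 1) : (1 : Matrix m m ℝ) = O * Matrix.diagonal (fun _ => 1) * Oᴴ := by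
  simp [hO', -Matrix.conjTranspose_eq_transpose_of_trivial]

theorem smul_one_sub_conj {m : Type*} [Fintype m] [DecidableEq m] {O : Matrix m m ℝ}
    (hO' : O * Oᴴ = 1) (r : ℝ) (v : m → ℝ) :
    r • (1 : Matrix m m ℝ) - O * Matrix.diagonal v * Oᴴ
      = O * Matrix.diagonal (fun i => r - v i) * Oᴴ := by
  have : Matrix.diagonal (fun i => r - v i) = r • (1 : Matrix m m ℝ) - Matrix.diagonal v := by
    ext i j; by_cases h : i = j <;> simp [h, Matrix.diagonal]
  rw [this, mul_sub, sub_mul]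
  simp [hO', -Matrix.conjTranspose_eq_transpose_of_trivial]

theorem inv_conj_diagonal {m : Type*} [Fintype m] [DecidableEq m] {O : Matrix m m ℝ}
    (hO : Oᴴ * O = 1) (hO' : O * Oᴴ = 1) {v : m → ℝ} (hv : ∀ i, v i ≠ 0) :
    (O * Matrix.diagonal v * Oᴴ)⁻¹ = O * Matrix.diagonal (fun i => (v i)⁻¹) * Oᴴ := by
  apply Matrix.inv_eq_right_inv
  rw [conj_mul_conj hO, Matrix.diagonal_mul_diagonal]
  simp [hv, hO', -Matrix.conjTranspose_eq_transpose_of_trivial]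

theorem trace_conj {m : Type*} [Fintype m] [DecidableEq m] {O : Matrix m m ℝ}
    (hO : Oᴴ * O = 1) (D : Matrix m m ℝ) : (O * D * Oᴴ).trace = D.trace := by
  rw [Matrix.trace_mul_comm, ← mul_assoc, hO, one_mul]

theorem Matrix.PosSemidef.trace_mul_nonneg {m : Type*} [Fintype m] [DecidableEq m]
    {A B : Matrix m m ℝ} (hA : A.PosSemidef) (hB : B.PosSemidef) : 0 ≤ (A * B).trace := by
  obtain ⟨O, v, hO, hO', rfl⟩ := exists_diagonalization hA.1
  have hv := diagonal_nonneg_of_posSemidef_conj hO hA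
  have h := hB.conjTranspose_mul_mul_same O
  rw [mul_assoc, Matrix.trace_mul_comm, ← mul_assoc, Matrix.trace_mul_comm, Matrix.trace]
  refine Finset.sum_nonneg fun i _ => ?_
  rw [Matrix.diag_apply, Matrix.diagonal_mul]
  exact mul_nonneg (hv i) h.diag_nonneg

/-- A scalar bound for the growth of inverse powers. -/
theorem inv_one_sub_pow_le {v η : ℝ} {p : ℕ} (hp : 1 ≤ p) (hv : 0 ≤ v) (hvη : v ≤ η)
    (hη : p * η < 1) : (1 - v)⁻¹ ^ p ≤ 1 + p / (1 - p * η) * v := by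
  have hp' : (1 : ℝ) ≤ p := by exact_mod_cast hp
  have hpv : p * v ≤ p * η := by gcongr
  have hv1 : v < 1 := by nlinarith
  have hb : 1 - p * v ≤ (1 - v) ^ p := by
    have := one_add_mul_le_pow (a := -v) (by linarith) p
    rw [← sub_eq_add_neg] at this
    linarith
  have h1 : 0 < 1 - p * v := by linarith
  have h2 : 0 < 1 - p * η := by linarith
  rw [inv_pow]
  calc ((1 - v) ^ p)⁻¹ ≤ (1 - p * v)⁻¹ := by gcongr
    _ = 1 + p / (1 - p * v) * v := by field_simp; ring
    _ ≤ _ := by gcongr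

theorem posSemidef_one_add_smul_sub_inv_pow {m : Type*} [Fintype m] [DecidableEq m]
    {V : Matrix m m ℝ} {η : ℝ} {p : ℕ} (hp : 1 ≤ p) (hV : V.PosSemidef)
    (hVη : (η • (1 : Matrix m m ℝ) - V).PosSemidef) (hη : p * η < 1) :
    IsUnit (1 - V).det ∧ (1 - V)⁻¹.IsHermitian ∧
      (1 + (p / (1 - p * η) : ℝ) • V - (1 - V)⁻¹ ^ p).PosSemidef := by
  obtain ⟨O, v, hO, hO', rfl⟩ := exists_diagonalization hV.1
  have hv := diagonal_nonneg_of_posSemidef_conj hO hV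
  rw [smul_one_sub_conj hO'] at hVη
  have hvη := diagonal_nonneg_of_posSemidef_conj hO hVη
  have hp' : (1 : ℝ) ≤ p := by exact_mod_cast hp
  have hv1 : ∀ i, 1 - v i ≠ 0 := fun i => by
    have h1 := hv i
    have h2 := hvη i
    have : v i < 1 := by nlinarith
    linarith
  have h1 := smul_one_sub_conj hO' 1 v
  rw [one_smul] at h1
  rw [h1, inv_conj_diagonal hO hO' hv1]
  refine ⟨?_, ?_, ?_⟩
  · refine (Matrix.isUnit_iff_isUnit_det _).1 ?_
    refine IsUnit.of_mul_eq_one (O * Matrix.diagonal (fun i => (1 - v i)⁻¹) * Oᴴ) ?_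
    rw [conj_mul_conj hO, Matrix.diagonal_mul_diagonal]
    simp [hv1, hO', -Matrix.conjTranspose_eq_transpose_of_trivial]
  · exact Matrix.isHermitian_mul_mul_conjTranspose _ (Matrix.isHermitian_diagonal _)
  · rw [conj_matrix_pow hO hO', Matrix.diagonal_pow]
    have h3 : 1 + (p / (1 - p * η) : ℝ) • (O * Matrix.diagonal v * Oᴴ)
        - O * Matrix.diagonal ((fun i => (1 - v i)⁻¹) ^ p) * Oᴴ
        = O * Matrix.diagonal
            (fun i => 1 + p / (1 - p * η) * v i - (1 - v i)⁻¹ ^ p) * Oᴴ := by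
      have : Matrix.diagonal (fun i => 1 + p / (1 - p * η) * v i - (1 - v i)⁻¹ ^ p)
          = 1 + (p / (1 - p * η) : ℝ) • Matrix.diagonal v
            - Matrix.diagonal ((fun i => (1 - v i)⁻¹) ^ p) := by
        ext i j; by_cases h : i = j <;> simp [h, Matrix.diagonal]
      rw [this, mul_sub, sub_mul, mul_add, add_mul]
      simp [hO', -Matrix.conjTranspose_eq_transpose_of_trivial]
    rw [h3]
    refine Matrix.PosSemidef.mul_mul_conjTranspose_same ?_ O
    rw [Matrix.posSemidef_diagonal_iff]
    intro i
    have := inv_one_sub_pow_le hp (hv i) (by linarith [hvη i]) hη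
    linarith

theorem exists_sqrt_inv {m : Type*} [Fintype m] [DecidableEq m] {B : Matrix m m ℝ}
    (hB : B.PosDef) : ∃ R : Matrix m m ℝ, R.IsHermitian ∧ R * R = B⁻¹ ∧ R * B * R = 1 := by
  obtain ⟨O, v, hO, hO', h⟩ := exists_diagonalization hB.1
  have hv : ∀ i, 0 < v i := fun i => by
    have h1 : (Oᴴ * B * O).PosDef := hB.conjTranspose_mul_mul_same (fun x y hxy => by
      have := congrArg (fun z => Oᴴ *ᵥ z) hxy
      simpa [Matrix.mulVec_mulVec, hO, -Matrix.conjTranspose_eq_transpose_of_trivial] using this)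
    have h2 : Oᴴ * (O * Matrix.diagonal v * Oᴴ) * O = Matrix.diagonal v := by
      calc _ = (Oᴴ * O) * Matrix.diagonal v * (Oᴴ * O) := by simp only [mul_assoc]
        _ = _ := by rw [hO]; simp
    rw [h, h2, Matrix.posDef_diagonal_iff] at h1
    exact h1 i
  refine ⟨O * Matrix.diagonal (fun i => (Real.sqrt (v i))⁻¹) * Oᴴ, ?_, ?_, ?_⟩
  · exact Matrix.isHermitian_mul_mul_conjTranspose _ (Matrix.isHermitian_diagonal _)
  · rw [conj_mul_conj hO, Matrix.diagonal_mul_diagonal, h,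
      inv_conj_diagonal hO hO' fun i => (hv i).ne']
    congr 3
    ext i
    rw [← mul_inv, Real.mul_self_sqrt (hv i).le]
  · rw [h, conj_mul_conj hO, conj_mul_conj hO, Matrix.diagonal_mul_diagonal,
      Matrix.diagonal_mul_diagonal, one_eq_conj hO']
    congr 3
    ext i
    have h1 := Real.sqrt_pos.2 (hv i)
    have h2 := Real.mul_self_sqrt (hv i).le
    field_simp
    linarith

/-- Removing a positive semidefinite summand `W ≤ η B` from `B` increases the trace of the `p`-th
power of the inverse by at most a first-order term. -/
theorem trace_inv_sub_pow_le {m : Type*} [Fintype m] [DecidableEq m] {B W : Matrix m m ℝ}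
    {η : ℝ} (k : ℕ) (hB : B.PosDef) (hW : W.PosSemidef) (hWB : (η • B - W).PosSemidef)
    (hη : (2 ^ k : ℕ) * η < 1) :
    ((B - W)⁻¹ ^ 2 ^ k).trace ≤ (B⁻¹ ^ 2 ^ k).trace
      + (2 ^ k : ℕ) / (1 - (2 ^ k : ℕ) * η) * (W * B⁻¹ ^ (2 ^ k + 1)).trace := by
  obtain ⟨R, hR, hRR, hRBR⟩ := exists_sqrt_inv hB
  set p := 2 ^ k
  set V := R * W * R with hVdef
  have hV : V.PosSemidef := by
    have := hW.mul_mul_conjTranspose_same R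
    rwa [hR.eq] at this
  have hVη : (η • (1 : Matrix m m ℝ) - V).PosSemidef := by
    have := hWB.mul_mul_conjTranspose_same R
    rw [hR.eq, mul_sub, sub_mul] at this
    simpa [hRBR] using this
  obtain ⟨hunit, hM, hle⟩ := posSemidef_one_add_smul_sub_inv_pow Nat.one_le_two_pow hV hVη hη
  have hinv : (B - W)⁻¹ = R * ((1 - V)⁻¹ * R) := by
    apply Matrix.inv_eq_left_inv
    have h1 : (R * (B - W)) * R = 1 - V := by rw [mul_sub, sub_mul, hRBR]
    have h2 : ((1 - V)⁻¹ * (R * (B - W))) * R = 1 := by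
      rw [mul_assoc, h1, Matrix.nonsing_inv_mul _ hunit]
    have h3 := mul_eq_one_comm.1 h2
    calc R * ((1 - V)⁻¹ * R) * (B - W) = R * ((1 - V)⁻¹ * (R * (B - W))) := by
          simp only [mul_assoc]
      _ = 1 := h3
  have hPp : (B⁻¹ ^ p).PosSemidef := hB.inv.posSemidef.pow p
  have hcomm : R * B⁻¹ ^ p = B⁻¹ ^ p * R := by
    have : Commute R B⁻¹ := by
      rw [← hRR]; exact (Commute.refl R).mul_right (Commute.refl R)
    exact this.pow_right p
  have hVtr : (V * B⁻¹ ^ p).trace = (W * B⁻¹ ^ (p + 1)).trace := by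
    rw [hVdef, mul_assoc, mul_assoc, Matrix.trace_mul_comm, hcomm, mul_assoc, mul_assoc, hRR,
      ← pow_succ]
  have hnn := hle.trace_mul_nonneg hPp
  rw [sub_mul, add_mul, one_mul, Matrix.trace_sub, Matrix.trace_add, Matrix.smul_mul,
    Matrix.trace_smul, smul_eq_mul, hVtr] at hnn
  have halt := trace_mul_pow_two_pow_le hM hB.inv.1 k
  rw [hinv, trace_mul_pow_comm, mul_assoc, hRR]
  linarith

theorem posSemidef_sub_smul_one_of_trace_inv_pow_lt {m : Type*} [Fintype m] [DecidableEq m]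
    {B : Matrix m m ℝ} {ρ : ℝ} {p : ℕ} (hB : B.PosDef) (hρ : 0 < ρ)
    (h : (B⁻¹ ^ p).trace < ρ⁻¹ ^ p) : (B - ρ • (1 : Matrix m m ℝ)).PosSemidef := by
  obtain ⟨O, v, hO, hO', hBO⟩ := exists_diagonalization hB.inv.1
  have hv := diagonal_nonneg_of_posSemidef_conj hO (hBO ▸ hB.inv.posSemidef)
  rw [hBO, conj_matrix_pow hO hO', trace_conj hO, Matrix.diagonal_pow, Matrix.trace_diagonal] at h
  have hle : ∀ i, v i ≤ ρ⁻¹ := fun i => by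
    have h1 : v i ^ p ≤ ∑ j, v j ^ p :=
      Finset.single_le_sum (f := fun j => v j ^ p) (fun j _ => pow_nonneg (hv j) p)
        (Finset.mem_univ i)
    exact (lt_of_pow_lt_pow_left₀ p (by positivity) (h1.trans_lt h)).le
  have h0 : ∀ i, v i ≠ 0 := by
    have h1 : IsUnit (O * Matrix.diagonal v * Oᴴ) := hBO ▸ hB.inv.isUnit
    have h2 : IsUnit (Oᴴ * (O * Matrix.diagonal v * Oᴴ) * O) :=
      ((IsUnit.of_mul_eq_one O hO).mul h1).mul (IsUnit.of_mul_eq_one Oᴴ hO')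
    have h3 : Oᴴ * (O * Matrix.diagonal v * Oᴴ) * O = Matrix.diagonal v := by
      calc _ = (Oᴴ * O) * Matrix.diagonal v * (Oᴴ * O) := by simp only [mul_assoc]
        _ = _ := by rw [hO]; simp
    rw [h3, Matrix.isUnit_diagonal] at h2
    intro i
    exact ((Pi.isUnit_iff.1 h2) i).ne_zero
  have hBeq : B = O * Matrix.diagonal (fun i => (v i)⁻¹) * Oᴴ := by
    rw [← inv_conj_diagonal hO hO' h0, ← hBO,
      Matrix.nonsing_inv_nonsing_inv _ ((Matrix.isUnit_iff_isUnit_det _).1 hB.isUnit)]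
  have hsub : B - ρ • (1 : Matrix m m ℝ)
      = O * Matrix.diagonal (fun i => -(ρ - (v i)⁻¹)) * Oᴴ := by
    have h1 := smul_one_sub_conj hO' ρ (fun i => (v i)⁻¹)
    have : Matrix.diagonal (fun i => -(ρ - (v i)⁻¹))
        = -Matrix.diagonal (fun i => ρ - (v i)⁻¹) := by
      rw [Matrix.diagonal_neg]
    rw [hBeq, ← neg_sub, h1, this, mul_neg, neg_mul]
  rw [hsub]
  refine Matrix.PosSemidef.mul_mul_conjTranspose_same ?_ O
  rw [Matrix.posSemidef_diagonal_iff]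
  intro i
  have hpos : 0 < v i := lt_of_le_of_ne (hv i) (h0 i).symm
  have := inv_anti₀ hpos (hle i)
  rw [inv_inv] at this
  linarith

/-- The average of `f` over all `k`-element subsets of a finite type. -/
noncomputable def subsetAvg {ι : Type*} [Fintype ι] (k : ℕ) (f : Finset ι → ℝ) : ℝ :=
  (∑ s ∈ (Finset.univ : Finset ι).powersetCard k, f s) / ((Fintype.card ι).choose k : ℝ)

theorem subsetAvg_mono {ι : Type*} [Fintype ι] {k : ℕ} {f g : Finset ι → ℝ}
    (h : ∀ s : Finset ι, s.card = k → f s ≤ g s) : subsetAvg k f ≤ subsetAvg k g := by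
  unfold subsetAvg
  gcongr with s hs
  exact h s (Finset.mem_powersetCard.1 hs).2

theorem subsetAvg_const_mul {ι : Type*} [Fintype ι] (k : ℕ) (r : ℝ) (f : Finset ι → ℝ) :
    subsetAvg k (fun s => r * f s) = r * subsetAvg k f := by
  simp [subsetAvg, ← Finset.mul_sum, mul_div_assoc]

theorem subsetAvg_sub {ι : Type*} [Fintype ι] (k : ℕ) (f g : Finset ι → ℝ) :
    subsetAvg k (fun s => f s - g s) = subsetAvg k f - subsetAvg k g := by
  simp [subsetAvg, sub_div]

theorem subsetAvg_card {ι : Type*} [Fintype ι] (f : Finset ι → ℝ) :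
    subsetAvg (Fintype.card ι) f = f Finset.univ := by
  simp only [subsetAvg, ← Finset.card_univ, Finset.powersetCard_self, Finset.sum_singleton,
    Nat.choose_self, Nat.cast_one, div_one]

/-- Erasing a uniformly random element of a uniformly random `(k + 1)`-subset yields a uniformly
random `k`-subset. -/
theorem succ_mul_subsetAvg {ι : Type*} [Fintype ι] [DecidableEq ι] {k : ℕ}
    (hk : k + 1 ≤ Fintype.card ι) (f : Finset ι → ℝ) :
    ((k : ℝ) + 1) * subsetAvg k f
      = subsetAvg (k + 1) (fun s => ∑ i ∈ s, f (s.erase i)) := by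
  have hcount : ∑ s ∈ (Finset.univ : Finset ι).powersetCard (k + 1), ∑ i ∈ s, f (s.erase i)
      = ∑ s ∈ (Finset.univ : Finset ι).powersetCard k, ∑ _i ∈ sᶜ, f s := by
    rw [Finset.sum_sigma', Finset.sum_sigma']
    refine Finset.sum_bij' (fun x _ => ⟨x.1.erase x.2, x.2⟩) (fun x _ => ⟨insert x.2 x.1, x.2⟩)
      ?_ ?_ ?_ ?_ ?_
    · rintro ⟨s, i⟩ h
      simp only [Finset.mem_sigma, Finset.mem_powersetCard] at h
      simp [Finset.mem_powersetCard, Finset.card_erase_of_mem h.2, h.1.2]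
    · rintro ⟨s, i⟩ h
      simp only [Finset.mem_sigma, Finset.mem_powersetCard, Finset.mem_compl] at h
      simp [Finset.mem_powersetCard, Finset.card_insert_of_notMem h.2, h.1.2]
    · rintro ⟨s, i⟩ h
      simp only [Finset.mem_sigma] at h
      simp [Finset.insert_erase h.2]
    · rintro ⟨s, i⟩ h
      simp only [Finset.mem_sigma, Finset.mem_compl] at h
      simp [Finset.erase_insert h.2]
    · rintro ⟨s, i⟩ _
      rfl
  have hinner : ∑ s ∈ (Finset.univ : Finset ι).powersetCard k, ∑ _i ∈ sᶜ, f s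
      = ((Fintype.card ι : ℝ) - k) * ∑ s ∈ (Finset.univ : Finset ι).powersetCard k, f s := by
    rw [Finset.mul_sum]
    refine Finset.sum_congr rfl fun s hs => ?_
    rw [Finset.sum_const, Finset.card_compl, (Finset.mem_powersetCard.1 hs).2, nsmul_eq_mul,
      Nat.cast_sub (by omega)]
  have hch : ((Fintype.card ι).choose (k + 1) : ℝ) * (k + 1)
      = (Fintype.card ι).choose k * ((Fintype.card ι : ℝ) - k) := by
    have := Nat.choose_succ_right_eq (Fintype.card ι) k
    rw [← Nat.cast_sub (by omega)]
    exact_mod_cast this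
  have h1 : 0 < ((Fintype.card ι).choose (k + 1) : ℝ) := by
    exact_mod_cast Nat.choose_pos hk
  have h2 : 0 < ((Fintype.card ι).choose k : ℝ) := by
    exact_mod_cast Nat.choose_pos (by omega)
  rw [subsetAvg, subsetAvg, hcount, hinner]
  field_simp
  linear_combination (∑ s ∈ (Finset.univ : Finset ι).powersetCard k, f s) * hch

/-- Markov's inequality for a uniformly random `k`-subset. -/
theorem card_filter_mul_le_subsetAvg {ι : Type*} [Fintype ι] {k : ℕ}
    (hk : k ≤ Fintype.card ι) {f : Finset ι → ℝ} (hf : ∀ s, s.card = k → 0 ≤ f s) {t : ℝ}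
    (P : Finset ι → Prop) [DecidablePred P] (hP : ∀ s, s.card = k → P s → t ≤ f s) :
    (((Finset.univ : Finset ι).powersetCard k).filter P).card * t
      ≤ subsetAvg k f * (Fintype.card ι).choose k := by
  have h2 : 0 < ((Fintype.card ι).choose k : ℝ) := by
    exact_mod_cast Nat.choose_pos hk
  rw [subsetAvg, div_mul_cancel₀ _ h2.ne', ← nsmul_eq_mul, ← Finset.sum_const]
  calc ∑ _s ∈ ((Finset.univ : Finset ι).powersetCard k).filter P, t
      ≤ ∑ s ∈ ((Finset.univ : Finset ι).powersetCard k).filter P, f s := by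
        refine Finset.sum_le_sum fun s hs => ?_
        rw [Finset.mem_filter, Finset.mem_powersetCard] at hs
        exact hP s hs.1.2 hs.2
    _ ≤ _ := by
        refine Finset.sum_le_sum_of_subset_of_nonneg (Finset.filter_subset _ _) fun s hs _ => ?_
        exact hf s (Finset.mem_powersetCard.1 hs).2

theorem posSemidef_sum_sub_smul_one {ι m : Type*} [Fintype m] [DecidableEq m]
    {W : ι → Matrix m m ℝ} {a : ℝ} (hlow : ∀ i, (W i - a • (1 : Matrix m m ℝ)).PosSemidef)
    (s : Finset ι) : (∑ i ∈ s, W i - (a * s.card) • (1 : Matrix m m ℝ)).PosSemidef := by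
  have h : ∑ i ∈ s, W i - (a * s.card) • (1 : Matrix m m ℝ)
      = ∑ i ∈ s, (W i - a • (1 : Matrix m m ℝ)) := by
    rw [Finset.sum_sub_distrib, Finset.sum_const, ← Nat.cast_smul_eq_nsmul ℝ, smul_smul, mul_comm]
  rw [h]
  exact Matrix.posSemidef_sum s fun i _ => hlow i

theorem posDef_sum_of_sub_smul_one {ι m : Type*} [Fintype m] [DecidableEq m]
    {W : ι → Matrix m m ℝ} {a : ℝ} (ha : 0 < a)
    (hlow : ∀ i, (W i - a • (1 : Matrix m m ℝ)).PosSemidef)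
    {s : Finset ι} (hs : 0 < s.card) : (∑ i ∈ s, W i).PosDef := by
  have hs' : (0 : ℝ) < s.card := by exact_mod_cast hs
  have := (Matrix.PosDef.one.smul (mul_pos ha hs')).add_posSemidef
    (posSemidef_sum_sub_smul_one hlow s)
  simpa using this

theorem sum_trace_inv_erase_pow_le {ι m : Type*} [DecidableEq ι] [Fintype m] [DecidableEq m]
    {W : ι → Matrix m m ℝ} {a l : ℝ} (ha : 0 < a) (hl : 0 ≤ l)
    (hlow : ∀ i, (W i - a • (1 : Matrix m m ℝ)).PosSemidef)
    (hup : ∀ i, (l • (1 : Matrix m m ℝ) - W i).PosSemidef) (k : ℕ) {s : Finset ι}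
    (hs : (2 ^ k : ℕ) * (l / a) < s.card) :
    ∑ i ∈ s, ((∑ j ∈ s.erase i, W j)⁻¹ ^ 2 ^ k).trace
      ≤ s.card * (1 + (2 ^ k : ℕ) / (s.card - (2 ^ k : ℕ) * (l / a)))
        * ((∑ j ∈ s, W j)⁻¹ ^ 2 ^ k).trace := by
  have hs0 : (0 : ℝ) < s.card := lt_of_le_of_lt (by positivity) hs
  set B := ∑ j ∈ s, W j with hBdef
  have hB : B.PosDef := posDef_sum_of_sub_smul_one ha hlow (by exact_mod_cast hs0)
  set p : ℕ := 2 ^ k with hp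
  set η := l / (a * s.card) with hη
  have hη1 : p * η < 1 := by
    have : (p : ℝ) * η = p * (l / a) / s.card := by rw [hη]; field_simp
    rw [this, div_lt_one hs0]
    exact hs
  have hW : ∀ i, (W i).PosSemidef := fun i => by
    have := (hlow i).add (Matrix.PosSemidef.one.smul ha.le)
    simpa using this
  have hWB : ∀ i, (η • B - W i).PosSemidef := fun i => by
    have h1 : η • B - W i = η • (B - (a * s.card) • (1 : Matrix m m ℝ))
        + (l • (1 : Matrix m m ℝ) - W i) := by
      have : η * (a * s.card) = l := by rw [hη]; field_simp
      rw [smul_sub, smul_smul, this]; abel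
    rw [h1]
    exact ((posSemidef_sum_sub_smul_one hlow s).smul (by positivity)).add (hup i)
  have hstep : ∀ i ∈ s, ((∑ j ∈ s.erase i, W j)⁻¹ ^ p).trace ≤ (B⁻¹ ^ p).trace
      + p / (1 - p * η) * (W i * B⁻¹ ^ (p + 1)).trace := fun i hi => by
    have h1 : ∑ j ∈ s.erase i, W j = B - W i := by
      rw [hBdef, ← Finset.sum_erase_add s W hi]; abel
    rw [h1]
    exact trace_inv_sub_pow_le k hB (hW i) (hWB i) hη1
  have hBB : B * B⁻¹ ^ (p + 1) = B⁻¹ ^ p := by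
    rw [pow_succ', ← mul_assoc, Matrix.mul_nonsing_inv _
      ((Matrix.isUnit_iff_isUnit_det _).1 hB.isUnit), one_mul]
  refine (Finset.sum_le_sum hstep).trans_eq ?_
  rw [Finset.sum_add_distrib, ← Finset.mul_sum,
    ← Matrix.trace_sum s (fun i => W i * B⁻¹ ^ (p + 1)), ← Finset.sum_mul, ← hBdef, hBB,
    Finset.sum_const, nsmul_eq_mul]
  have h3 : (p : ℝ) / (1 - p * η) = s.card * (p / (s.card - p * (l / a))) := by
    have h4 : (s.card : ℝ) - p * (l / a) = s.card * (1 - p * η) := by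
      rw [hη]; field_simp
    have h5 : 1 - p * η ≠ 0 := by linarith
    rw [h4]; field_simp
  rw [h3]; ring

/-- The matrix Chernoff-type estimate for sampling without replacement: the average over
`c`-subsets of the trace of a high power of the inverse of the sampled sum. -/
theorem subsetAvg_trace_inv_pow_le {ι m : Type*} [Fintype ι] [DecidableEq ι] [Fintype m]
    [DecidableEq m] {W : ι → Matrix m m ℝ} {a l b : ℝ} (ha : 0 < a) (hl : 0 ≤ l) (hb : 0 < b)
    (hlow : ∀ i, (W i - a • (1 : Matrix m m ℝ)).PosSemidef)
    (hup : ∀ i, (l • (1 : Matrix m m ℝ) - W i).PosSemidef)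
    (hsum : ∑ i, W i = b • (1 : Matrix m m ℝ)) (k : ℕ) {c : ℕ} (hc : c ≤ Fintype.card ι)
    (hq : (2 ^ k : ℕ) * (l / a) < c + 1) :
    subsetAvg c (fun s : Finset ι => ((∑ i ∈ s, W i)⁻¹ ^ 2 ^ k).trace)
      ≤ Fintype.card m * b⁻¹ ^ 2 ^ k *
        ((Fintype.card ι + 1 - (2 ^ k : ℕ) * (l / a)) / (c + 1 - (2 ^ k : ℕ) * (l / a))) ^ 2 ^ k := by
  set q : ℝ := (2 ^ k : ℕ) * (l / a) with hqdef
  induction hc using Nat.decreasingInduction with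
  | self =>
    have h1 : (b • (1 : Matrix m m ℝ))⁻¹ = b⁻¹ • (1 : Matrix m m ℝ) := by
      apply Matrix.inv_eq_left_inv
      simp [smul_smul, hb.ne']
    rw [subsetAvg_card, hsum, h1, smul_pow, one_pow, Matrix.trace_smul, Matrix.trace_one,
      div_self (by linarith)]
    simp [mul_comm]
  | of_succ c hc ih =>
    have hc' : c + 1 ≤ Fintype.card ι := hc
    have ih := ih (by push_cast; linarith)
    push_cast at ih
    have hpos : 0 < (c : ℝ) + 1 - q := by linarith
    have hkey := succ_mul_subsetAvg hc'
      (fun s : Finset ι => ((∑ i ∈ s, W i)⁻¹ ^ 2 ^ k).trace)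
    have hle : subsetAvg (c + 1) (fun s : Finset ι => ∑ i ∈ s,
          ((∑ j ∈ s.erase i, W j)⁻¹ ^ 2 ^ k).trace)
        ≤ subsetAvg (c + 1) (fun s : Finset ι =>
          ((c + 1 : ℝ) * (1 + (2 ^ k : ℕ) / (c + 1 - q))) *
            ((∑ j ∈ s, W j)⁻¹ ^ 2 ^ k).trace) := by
      refine subsetAvg_mono fun s hs => ?_
      have := sum_trace_inv_erase_pow_le ha hl hlow hup k (s := s) 
        (by rw [hs]; exact_mod_cast hq)
      rw [hs] at this
      push_cast at this ⊢
      rw [hqdef]; push_cast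
      exact this
    rw [subsetAvg_const_mul] at hle
    set A := subsetAvg c (fun s : Finset ι => ((∑ i ∈ s, W i)⁻¹ ^ 2 ^ k).trace)
    set A' := subsetAvg (c + 1) (fun s : Finset ι => ((∑ i ∈ s, W i)⁻¹ ^ 2 ^ k).trace)
    have hA' : 0 ≤ A' := by
      refine div_nonneg (Finset.sum_nonneg fun s hs => ?_) (by positivity)
      have hW : (∑ i ∈ s, W i).PosSemidef := Matrix.posSemidef_sum s fun i _ => by
        have := (hlow i).add (Matrix.PosSemidef.one.smul ha.le)
        simpa using this
      exact (hW.inv.pow _).trace_nonneg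
    rw [← hkey, mul_assoc] at hle
    have h1 : A ≤ (1 + (2 ^ k : ℕ) / (c + 1 - q)) * A' :=
      le_of_mul_le_mul_left hle (by positivity)
    have h2 : 1 + ((2 ^ k : ℕ) : ℝ) / (c + 1 - q) ≤ ((c + 1 + 1 - q) / (c + 1 - q)) ^ 2 ^ k := by
      have := one_add_mul_le_pow (a := 1 / ((c : ℝ) + 1 - q))
        (by have : 0 ≤ 1 / ((c : ℝ) + 1 - q) := by positivity
            linarith) (2 ^ k)
      have h3 : 1 + 1 / ((c : ℝ) + 1 - q) = (c + 1 + 1 - q) / (c + 1 - q) := by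
        field_simp; ring
      rw [h3] at this
      calc _ = 1 + ((2 ^ k : ℕ) : ℝ) * (1 / (c + 1 - q)) := by ring
        _ ≤ _ := this
    calc A ≤ _ := h1
      _ ≤ ((c + 1 + 1 - q) / (c + 1 - q)) ^ 2 ^ k * (Fintype.card m * b⁻¹ ^ 2 ^ k *
          ((Fintype.card ι + 1 - q) / (c + 1 + 1 - q)) ^ 2 ^ k) := by
        have : 0 ≤ ((c : ℝ) + 1 + 1 - q) / (c + 1 - q) := div_nonneg (by linarith) hpos.le
        gcongr
      _ = Fintype.card m * b⁻¹ ^ 2 ^ k * (((c + 1 + 1 - q) / (c + 1 - q)) *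
          ((Fintype.card ι + 1 - q) / (c + 1 + 1 - q))) ^ 2 ^ k := by
        rw [mul_pow]; ring
      _ = _ := by
        congr 2
        have : (c : ℝ) + 1 + 1 - q ≠ 0 := by linarith
        field_simp

/-- The second moment of a sum over a random subset of vectors that add up to zero. -/
theorem subsetAvg_norm_sq_le {ι m : Type*} [Fintype ι] [DecidableEq ι] [Fintype m]
    {w : ι → m → ℝ} (hw : ∑ i, w i = 0) {c : ℕ} (hc : c ≤ Fintype.card ι) (hc1 : 1 ≤ c) :
    subsetAvg c (fun s : Finset ι => (∑ i ∈ s, w i) ⬝ᵥ (∑ i ∈ s, w i))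
      ≤ c / Fintype.card ι * ∑ i, w i ⬝ᵥ w i := by
  have ht : subsetAvg c (fun s : Finset ι => ∑ i ∈ s, w i ⬝ᵥ w i)
      = c / Fintype.card ι * ∑ i, w i ⬝ᵥ w i := by
    clear hw
    induction hc using Nat.decreasingInduction with
    | self =>
      rw [subsetAvg_card, div_self (by positivity), one_mul]
    | of_succ c hc ih =>
      have ih := ih (by omega)
      have hkey := succ_mul_subsetAvg hc (fun s : Finset ι => ∑ i ∈ s, w i ⬝ᵥ w i)
      have h1 : subsetAvg (c + 1) (fun s : Finset ι => ∑ i ∈ s, ∑ j ∈ s.erase i, w j ⬝ᵥ w j)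
          ≤ subsetAvg (c + 1) (fun s : Finset ι => (c : ℝ) * ∑ j ∈ s, w j ⬝ᵥ w j) ∧
          subsetAvg (c + 1) (fun s : Finset ι => (c : ℝ) * ∑ j ∈ s, w j ⬝ᵥ w j)
          ≤ subsetAvg (c + 1) (fun s : Finset ι => ∑ i ∈ s, ∑ j ∈ s.erase i, w j ⬝ᵥ w j) := by
        have : ∀ s : Finset ι, s.card = c + 1 → ∑ i ∈ s, ∑ j ∈ s.erase i, w j ⬝ᵥ w j
            = (c : ℝ) * ∑ j ∈ s, w j ⬝ᵥ w j := fun s hs => by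
          rw [Finset.sum_congr rfl fun i hi =>
            Finset.sum_erase_eq_sub (f := fun j => w j ⬝ᵥ w j) hi]
          rw [Finset.sum_sub_distrib, Finset.sum_const, hs, nsmul_eq_mul]
          push_cast; ring
        exact ⟨subsetAvg_mono fun s hs => (this s hs).le, subsetAvg_mono fun s hs => (this s hs).ge⟩
      rw [le_antisymm h1.1 h1.2, subsetAvg_const_mul, ih] at hkey
      have hpos : (0 : ℝ) < c + 1 := by positivity
      have := mul_left_cancel₀ hpos.ne' (hkey.trans
        (show _ = ((c : ℝ) + 1) * (c / Fintype.card ι * ∑ i, w i ⬝ᵥ w i) by push_cast; ring))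
      exact this
  rw [← ht, ← sub_nonpos, ← subsetAvg_sub]
  clear ht
  induction hc using Nat.decreasingInduction with
  | self =>
    rw [subsetAvg_card, hw]
    have : 0 ≤ ∑ i, w i ⬝ᵥ w i :=
      Finset.sum_nonneg fun i _ => Finset.sum_nonneg fun j _ => mul_self_nonneg _
    simpa using this
  | of_succ c hc ih =>
    have ih := ih (by omega)
    have hkey := succ_mul_subsetAvg hc (fun s : Finset ι =>
      (∑ i ∈ s, w i) ⬝ᵥ (∑ i ∈ s, w i) - ∑ i ∈ s, w i ⬝ᵥ w i)
    have h1 : subsetAvg (c + 1) (fun s : Finset ι => ∑ i ∈ s,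
          ((∑ j ∈ s.erase i, w j) ⬝ᵥ (∑ j ∈ s.erase i, w j) - ∑ j ∈ s.erase i, w j ⬝ᵥ w j))
        ≤ subsetAvg (c + 1) (fun s : Finset ι => ((c : ℝ) - 1) *
          ((∑ i ∈ s, w i) ⬝ᵥ (∑ i ∈ s, w i) - ∑ i ∈ s, w i ⬝ᵥ w i)) := by
      refine subsetAvg_mono fun s hs => le_of_eq ?_
      have h2 : ∀ i ∈ s, (∑ j ∈ s.erase i, w j) ⬝ᵥ (∑ j ∈ s.erase i, w j)
            - ∑ j ∈ s.erase i, w j ⬝ᵥ w j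
          = ((∑ j ∈ s, w j) ⬝ᵥ (∑ j ∈ s, w j) - ∑ j ∈ s, w j ⬝ᵥ w j)
            + 2 * (w i ⬝ᵥ w i) - 2 * (w i ⬝ᵥ ∑ j ∈ s, w j) := fun i hi => by
        rw [Finset.sum_erase_eq_sub hi, Finset.sum_erase_eq_sub (f := fun j => w j ⬝ᵥ w j) hi,
          sub_dotProduct, dotProduct_sub, dotProduct_sub, dotProduct_comm (∑ j ∈ s, w j) (w i)]
        ring
      rw [Finset.sum_congr rfl h2, Finset.sum_sub_distrib, Finset.sum_add_distrib,
        Finset.sum_const, hs, nsmul_eq_mul, ← Finset.mul_sum, ← Finset.mul_sum,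
        ← sum_dotProduct]
      push_cast; ring
    rw [← hkey, subsetAvg_const_mul] at h1
    have hc' : (1 : ℝ) ≤ c := by exact_mod_cast hc1
    have h3 := mul_nonpos_of_nonneg_of_nonpos (sub_nonneg.2 hc') ih
    exact nonpos_of_mul_nonpos_right (h1.trans h3) (by positivity)

theorem exists_two_pow_near_log (d : ℕ) :
    ∃ k : ℕ, Real.log d ≤ (2 ^ k : ℕ) ∧ ((2 ^ k : ℕ) : ℝ) ≤ 2 * Real.log d + 2 := by
  have hlog : 0 ≤ Real.log d := Real.log_natCast_nonneg d
  obtain ⟨j, hj1, hj2⟩ := exists_nat_pow_near (x := Real.log d + 1) (by linarith) one_lt_two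
  refine ⟨j + 1, ?_, ?_⟩ <;> push_cast
  · linarith
  · rw [pow_succ]; linarith

theorem natCast_mul_pow_le {d p : ℕ} {x : ℝ} (hd : 1 ≤ d) (hp : 1 ≤ p) (hdp : Real.log d ≤ p)
    (hx0 : 0 ≤ x) (hx : x ≤ 0.11) : d * x ^ p ≤ 0.3 := by
  have hd' : (0 : ℝ) < d := by exact_mod_cast hd
  have h1 : (d : ℝ) ≤ Real.exp 1 ^ p := by
    rw [← Real.exp_nat_mul, mul_one, ← Real.log_le_iff_le_exp hd']
    exact hdp
  calc d * x ^ p ≤ Real.exp 1 ^ p * x ^ p := by gcongr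
    _ = (Real.exp 1 * x) ^ p := (mul_pow _ _ _).symm
    _ ≤ (0.3 : ℝ) ^ p := by
        have := Real.exp_one_lt_d9
        have h2 := Real.exp_pos 1
        gcongr
        nlinarith
    _ ≤ 0.3 := pow_le_of_le_one (by norm_num) (by norm_num) (by omega)

theorem card_filter_not_posSemidef_le {n d : ℕ} (hd : 1 ≤ d) {U : Matrix (Fin n) (Fin d) ℝ}
    (hU : Uᵀ * U = 1) {L : ℝ} (hL : ∀ i, U i ⬝ᵥ U i ≤ L) (hnL : 1 ≤ n * L) {c : ℕ}
    (hc : 1000 * (n * L) * (Real.log d + 7) ≤ c) (hcn : c ≤ n)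
    (P : Finset (Fin n) → Prop) [DecidablePred P]
    (hP : ∀ s, s.card = c → P s → ¬ (∑ i ∈ s, Matrix.vecMulVec (U i) (U i)
      - ((c : ℝ) / (20 * n)) • (1 : Matrix (Fin d) (Fin d) ℝ)).PosSemidef) :
    ((((Finset.univ : Finset (Fin n)).powersetCard c).filter P).card : ℝ)
      ≤ 0.3 * n.choose c := by
  have hlog : 0 ≤ Real.log d := Real.log_natCast_nonneg d
  have hc0 : (0 : ℝ) < c := by nlinarith
  have hn0 : (0 : ℝ) < n := hc0.trans_le (by exact_mod_cast hcn)
  have hcn' : (c : ℝ) ≤ n := by exact_mod_cast hcn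
  have hL0 : 0 < L := by
    by_contra h
    nlinarith [mul_nonneg hn0.le (sub_nonneg.2 (not_lt.1 h))]
  obtain ⟨k, hk1, hk2⟩ := exists_two_pow_near_log d
  set p : ℕ := 2 ^ k with hp
  have hp1 : 1 ≤ p := Nat.one_le_two_pow
  have hp1' : (1 : ℝ) ≤ p := by exact_mod_cast hp1
  set a : ℝ := 1 / (20 * n) with ha
  have ha0 : 0 < a := by positivity
  set W : Fin n → Matrix (Fin d) (Fin d) ℝ :=
    fun i => Matrix.vecMulVec (U i) (U i) + a • (1 : Matrix (Fin d) (Fin d) ℝ) with hW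
  have hrank : ∀ i, (Matrix.vecMulVec (U i) (U i)).PosSemidef := fun i => by
    simpa using Matrix.posSemidef_vecMulVec_self_star (U i)
  have hlow : ∀ i, (W i - a • (1 : Matrix (Fin d) (Fin d) ℝ)).PosSemidef := fun i => by
    simpa [hW] using hrank i
  have hup : ∀ i, ((L + a) • (1 : Matrix (Fin d) (Fin d) ℝ) - W i).PosSemidef := fun i => by
    have h1 : (L + a) • (1 : Matrix (Fin d) (Fin d) ℝ) - W i
        = L • (1 : Matrix (Fin d) (Fin d) ℝ) - Matrix.vecMulVec (U i) (U i) := by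
      simp only [hW, add_smul]; abel
    rw [h1]
    refine Matrix.PosSemidef.of_dotProduct_mulVec_nonneg
      ((Matrix.PosSemidef.one.smul hL0.le).1.sub (hrank i).1) fun x => ?_
    have h2 : (U i ⬝ᵥ x) ^ 2 ≤ (U i ⬝ᵥ U i) * (x ⬝ᵥ x) := by
      simpa [dotProduct, pow_two] using Finset.sum_mul_sq_le_sq_mul_sq Finset.univ (U i) x
    have h3 : 0 ≤ x ⬝ᵥ x := Finset.sum_nonneg fun j _ => mul_self_nonneg _
    have h4 : star x ⬝ᵥ ((L • (1 : Matrix (Fin d) (Fin d) ℝ)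
        - Matrix.vecMulVec (U i) (U i)) *ᵥ x) = L * (x ⬝ᵥ x) - (U i ⬝ᵥ x) ^ 2 := by
      rw [Matrix.sub_mulVec, Matrix.smul_mulVec, Matrix.one_mulVec, Matrix.vecMulVec_mulVec,
        dotProduct_sub, dotProduct_smul]
      simp [dotProduct_comm x (U i), pow_two]
    rw [h4]
    nlinarith [mul_le_mul_of_nonneg_right (hL i) h3]
  have hsum : ∑ i, W i = (21 / 20 : ℝ) • (1 : Matrix (Fin d) (Fin d) ℝ) := by
    have h1 : ∑ i, Matrix.vecMulVec (U i) (U i) = 1 := by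
      rw [← hU]
      ext j j'
      simp [Matrix.sum_apply, Matrix.mul_apply, Matrix.vecMulVec_apply]
    rw [hW, Finset.sum_add_distrib, h1, Finset.sum_const, Finset.card_univ, Fintype.card_fin,
      ← Nat.cast_smul_eq_nsmul ℝ, smul_smul]
    have h2 : (n : ℝ) * a = 1 / 20 := by rw [ha]; field_simp
    rw [h2, show (21 / 20 : ℝ) = 1 + 1 / 20 by norm_num, add_smul, one_smul]
  have hla : (L + a) / a = 20 * (n * L) + 1 := by rw [ha]; field_simp
  set q : ℝ := p * ((L + a) / a) with hq
  have hq1 : 1 ≤ q := by rw [hq, hla]; nlinarith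
  have hqc : q ≤ 0.05 * c := by
    rw [hq, hla]
    have h1 : (p : ℝ) * (20 * (n * L) + 1) ≤ (2 * Real.log d + 2) * (21 * (n * L)) := by
      gcongr
      linarith
    have h2 : 0 ≤ (n * L) * Real.log d := by positivity
    nlinarith
  have havg := subsetAvg_trace_inv_pow_le (c := c) ha0 (by positivity) (by norm_num : (0 : ℝ) < 21 / 20)
    hlow hup hsum k (by simpa using hcn) (by rw [← hp, ← hq]; linarith)
  rw [← hp, ← hq, Fintype.card_fin, Fintype.card_fin] at havg
  have hWpd : ∀ s : Finset (Fin n), s.card = c → (∑ i ∈ s, W i).PosDef := fun s hs =>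
    posDef_sum_of_sub_smul_one ha0 hlow (by rw [hs]; exact_mod_cast hc0)
  set ρ : ℝ := c / (10 * n) with hρ
  have hρ0 : 0 < ρ := by positivity
  have hmarkov := card_filter_mul_le_subsetAvg (k := c) (by simpa using hcn)
    (f := fun s : Finset (Fin n) => ((∑ i ∈ s, W i)⁻¹ ^ p).trace) (t := ρ⁻¹ ^ p)
    (fun s hs => ((hWpd s hs).inv.posSemidef.pow p).trace_nonneg) P (fun s hs hPs => by
      by_contra! hlt
      refine hP s hs hPs ?_
      have h1 := posSemidef_sub_smul_one_of_trace_inv_pow_lt (hWpd s hs) hρ0 hlt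
      have h2 : ∑ i ∈ s, W i - ρ • (1 : Matrix (Fin d) (Fin d) ℝ)
          = ∑ i ∈ s, Matrix.vecMulVec (U i) (U i)
            - ((c : ℝ) / (20 * n)) • (1 : Matrix (Fin d) (Fin d) ℝ) := by
        rw [hW, Finset.sum_add_distrib, Finset.sum_const, hs, ← Nat.cast_smul_eq_nsmul ℝ, smul_smul]
        have h3 : ρ = c * a + c / (20 * n) := by rw [hρ, ha]; field_simp; norm_num
        rw [h3, add_smul]; abel
      rwa [h2] at h1)
  rw [Fintype.card_fin] at hmarkov
  set N : ℝ := (n.choose c : ℝ)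
  have hN : 0 ≤ N := by positivity
  set x : ℝ := ρ * ((21 / 20 : ℝ)⁻¹ * ((n + 1 - q) / (c + 1 - q))) with hx
  have hcq : 0 < (c : ℝ) + 1 - q := by linarith
  have hx0 : 0 ≤ x := by
    have : 0 ≤ (n : ℝ) + 1 - q := by linarith
    positivity
  have hx1 : x ≤ 0.11 := by
    have h1 : x = (2 / 21) * (c * (n + 1 - q)) / (n * (c + 1 - q)) := by
      rw [hx, hρ]; field_simp; ring
    rw [h1, div_le_iff₀ (by positivity)]
    have h2 : (c : ℝ) * (n + 1 - q) ≤ c * n := by gcongr; linarith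
    have h3 : (n : ℝ) * (0.95 * c) ≤ n * (c + 1 - q) := by gcongr; linarith
    nlinarith [mul_pos hn0 hc0]
  have hfin := natCast_mul_pow_le hd hp1 hk1 hx0 hx1
  have h4 : ((((Finset.univ : Finset (Fin n)).powersetCard c).filter P).card : ℝ)
      ≤ (d * x ^ p) * N := by
    have h5 : (0 : ℝ) < ρ ^ p := by positivity
    calc _ = ((((Finset.univ : Finset (Fin n)).powersetCard c).filter P).card * ρ⁻¹ ^ p) * ρ ^ p := by
          rw [inv_pow]; field_simp
      _ ≤ (d * (21 / 20 : ℝ)⁻¹ ^ p * ((n + 1 - q) / (c + 1 - q)) ^ p * N) * ρ ^ p := by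
          refine mul_le_mul_of_nonneg_right ?_ h5.le
          exact hmarkov.trans (mul_le_mul_of_nonneg_right havg hN)
      _ = _ := by rw [hx, mul_pow, mul_pow]; ring
  exact h4.trans (by gcongr)

theorem dotProduct_self_le_of_sum_sq_le {ι m : Type*} [Fintype m] [DecidableEq m]
    {u : ι → m → ℝ} {r : ι → ℝ} {s : Finset ι} {δ : ℝ} (hδ : 0 < δ)
    (hpsd : (∑ i ∈ s, Matrix.vecMulVec (u i) (u i) - δ • (1 : Matrix m m ℝ)).PosSemidef)
    {z : m → ℝ} (hz : ∑ i ∈ s, (r i - u i ⬝ᵥ z) ^ 2 ≤ ∑ i ∈ s, r i ^ 2) :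
    δ ^ 2 * (z ⬝ᵥ z) ≤ 4 * ((∑ i ∈ s, r i • u i) ⬝ᵥ (∑ i ∈ s, r i • u i)) := by
  set w := ∑ i ∈ s, r i • u i with hw
  have h1 : δ * (z ⬝ᵥ z) ≤ ∑ i ∈ s, (u i ⬝ᵥ z) ^ 2 := by
    have h := hpsd.dotProduct_mulVec_nonneg z
    rw [Matrix.sub_mulVec, Matrix.smul_mulVec, Matrix.one_mulVec, Matrix.sum_mulVec,
      dotProduct_sub, dotProduct_sum, dotProduct_smul] at h
    have h2 : ∀ i ∈ s, star z ⬝ᵥ (Matrix.vecMulVec (u i) (u i) *ᵥ z) = (u i ⬝ᵥ z) ^ 2 := by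
      intro i _
      rw [Matrix.vecMulVec_mulVec]
      simp [dotProduct_comm z (u i), pow_two]
    rw [Finset.sum_congr rfl h2] at h
    simpa using h
  have h2 : ∑ i ∈ s, (u i ⬝ᵥ z) ^ 2 ≤ 2 * (w ⬝ᵥ z) := by
    have h3 : w ⬝ᵥ z = ∑ i ∈ s, r i * (u i ⬝ᵥ z) := by
      rw [hw, sum_dotProduct]; simp
    have h4 : ∑ i ∈ s, (r i - u i ⬝ᵥ z) ^ 2
        = ∑ i ∈ s, r i ^ 2 - 2 * ∑ i ∈ s, r i * (u i ⬝ᵥ z) + ∑ i ∈ s, (u i ⬝ᵥ z) ^ 2 := by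
      rw [Finset.mul_sum, ← Finset.sum_sub_distrib, ← Finset.sum_add_distrib]
      exact Finset.sum_congr rfl fun i _ => by ring
    rw [h3]; linarith
  have hcs : (w ⬝ᵥ z) ^ 2 ≤ (w ⬝ᵥ w) * (z ⬝ᵥ z) := by
    simpa [dotProduct, pow_two] using Finset.sum_mul_sq_le_sq_mul_sq Finset.univ w z
  have hzz : 0 ≤ z ⬝ᵥ z := Finset.sum_nonneg fun j _ => mul_self_nonneg _
  have hww : 0 ≤ w ⬝ᵥ w := Finset.sum_nonneg fun j _ => mul_self_nonneg _
  rcases hzz.eq_or_lt with h0 | h0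
  · rw [← h0]; simpa using hww
  · have h3 : (δ * (z ⬝ᵥ z)) ^ 2 ≤ (2 * (w ⬝ᵥ z)) ^ 2 :=
      pow_le_pow_left₀ (by positivity) (h1.trans h2) 2
    nlinarith

theorem card_filter_second_moment_le {n d : ℕ} {U : Matrix (Fin n) (Fin d) ℝ} {L : ℝ}
    (hL : ∀ i, U i ⬝ᵥ U i ≤ L) {r : Fin n → ℝ} (hr : ∑ i, r i • U i = 0) {c : ℕ}
    (hc0 : 0 < c) (hc : 7000 * (n * L) ≤ c) (hcn : c ≤ n)
    (P : Finset (Fin n) → Prop) [DecidablePred P]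
    (hP : ∀ s, s.card = c → P s → 0.3 * ((c : ℝ) / (20 * n)) ^ 2 * (r ⬝ᵥ r)
      < (∑ i ∈ s, r i • U i) ⬝ᵥ (∑ i ∈ s, r i • U i)) :
    ((((Finset.univ : Finset (Fin n)).powersetCard c).filter P).card : ℝ)
      ≤ 0.2 * n.choose c := by
  have hc0' : (0 : ℝ) < c := by exact_mod_cast hc0
  have hn0 : (0 : ℝ) < n := hc0'.trans_le (by exact_mod_cast hcn)
  have hrr : 0 ≤ r ⬝ᵥ r := Finset.sum_nonneg fun j _ => mul_self_nonneg _
  rcases hrr.eq_or_lt with h0 | h0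
  · have hr0 : r = 0 := dotProduct_self_eq_zero.1 h0.symm
    have : ((Finset.univ : Finset (Fin n)).powersetCard c).filter P = ∅ := by
      refine Finset.filter_eq_empty_iff.2 fun s hs hPs => ?_
      have := hP s (Finset.mem_powersetCard.1 hs).2 hPs
      simp [hr0] at this
    rw [this, Finset.card_empty, Nat.cast_zero]
    positivity
  · have hmom := subsetAvg_norm_sq_le (w := fun i => r i • U i) hr (c := c) (by simpa using hcn) hc0
    rw [Fintype.card_fin] at hmom
    have hle : ∑ i, (r i • U i) ⬝ᵥ (r i • U i) ≤ L * (r ⬝ᵥ r) := by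
      rw [dotProduct, Finset.mul_sum]
      refine Finset.sum_le_sum fun i _ => ?_
      rw [smul_dotProduct, dotProduct_smul, smul_eq_mul, smul_eq_mul]
      nlinarith [mul_le_mul_of_nonneg_left (hL i) (mul_self_nonneg (r i))]
    have hmarkov := card_filter_mul_le_subsetAvg (k := c) (by simpa using hcn)
      (f := fun s : Finset (Fin n) => (∑ i ∈ s, r i • U i) ⬝ᵥ (∑ i ∈ s, r i • U i))
      (fun s _ => Finset.sum_nonneg fun j _ => mul_self_nonneg _) P
      (fun s hs hPs => (hP s hs hPs).le)
    rw [Fintype.card_fin] at hmarkov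
    set N : ℝ := (n.choose c : ℝ)
    have hN : 0 ≤ N := by positivity
    have h1 : (c : ℝ) / n * ∑ i, (r i • U i) ⬝ᵥ (r i • U i)
        ≤ 0.2 * (0.3 * ((c : ℝ) / (20 * n)) ^ 2 * (r ⬝ᵥ r)) := by
      calc (c : ℝ) / n * ∑ i, (r i • U i) ⬝ᵥ (r i • U i) ≤ c / n * (L * (r ⬝ᵥ r)) := by gcongr
        _ = (n * L) * (c / n ^ 2 * (r ⬝ᵥ r)) := by field_simp
        _ ≤ (c / 7000) * (c / n ^ 2 * (r ⬝ᵥ r)) := by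
          gcongr; linarith
        _ = 1 / 7000 * ((c / n) ^ 2 * (r ⬝ᵥ r)) := by ring
        _ ≤ 0.06 / 400 * ((c / n) ^ 2 * (r ⬝ᵥ r)) :=
          mul_le_mul_of_nonneg_right (by norm_num) (by positivity)
        _ = _ := by ring
    have h2 := hmarkov.trans (mul_le_mul_of_nonneg_right (hmom.trans h1) hN)
    have h3 : 0 < 0.3 * ((c : ℝ) / (20 * n)) ^ 2 * (r ⬝ᵥ r) := by positivity
    refine le_of_mul_le_mul_right (h2.trans_eq ?_) h3
    ring

/-- With probability at least one half, a uniform row sample of an orthonormal basis controls the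
error of sampled least squares for a residual orthogonal to the columns. -/
theorem half_le_card_filter_sampled_error {n d : ℕ} (hd : 1 ≤ d) {U : Matrix (Fin n) (Fin d) ℝ}
    (hU : Uᵀ * U = 1) {L : ℝ} (hL : ∀ i, U i ⬝ᵥ U i ≤ L) (hnL : 1 ≤ n * L) {r : Fin n → ℝ}
    (hr : ∑ i, r i • U i = 0) {c : ℕ}
    (hc : 1000 * (n * L) * (Real.log d + 7) ≤ c) (hcn : c ≤ n)
    (P : Finset (Fin n) → Prop) [DecidablePred P]
    (hP : ∀ s, s.card = c → (∀ z : Fin d → ℝ, ∑ i ∈ s, (r i - U i ⬝ᵥ z) ^ 2 ≤ ∑ i ∈ s, r i ^ 2 →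
      z ⬝ᵥ z ≤ 1.2 * (r ⬝ᵥ r)) → P s) :
    (1 / 2 : ℝ) * n.choose c
      ≤ (((Finset.univ : Finset (Fin n)).powersetCard c).filter P).card := by
  have hlog : 0 ≤ Real.log d := Real.log_natCast_nonneg d
  have hc0 : (0 : ℝ) < c := by nlinarith
  have hn0 : (0 : ℝ) < n := hc0.trans_le (by exact_mod_cast hcn)
  set δ : ℝ := (c : ℝ) / (20 * n) with hδ
  have hδ0 : 0 < δ := by positivity
  let Q : Finset (Fin n) → Prop := fun s => ¬ (∑ i ∈ s, Matrix.vecMulVec (U i) (U i)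
      - δ • (1 : Matrix (Fin d) (Fin d) ℝ)).PosSemidef
  let R : Finset (Fin n) → Prop := fun s => 0.3 * δ ^ 2 * (r ⬝ᵥ r)
      < (∑ i ∈ s, r i • U i) ⬝ᵥ (∑ i ∈ s, r i • U i)
  have hQ := card_filter_not_posSemidef_le hd hU hL hnL hc hcn Q fun s _ h => h
  have hR := card_filter_second_moment_le hL hr (by exact_mod_cast hc0) (by nlinarith) hcn R
    fun s _ h => h
  set F := (Finset.univ : Finset (Fin n)).powersetCard c with hF
  have hcover : F ⊆ F.filter P ∪ (F.filter Q ∪ F.filter R) := by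
    intro s hs
    have hcard := (Finset.mem_powersetCard.1 hs).2
    by_cases hq : Q s
    · simp [hs, hq]
    by_cases hr' : R s
    · simp [hs, hr']
    have hPs : P s := by
      refine hP s hcard fun z hz => ?_
      have h1 := dotProduct_self_le_of_sum_sq_le hδ0 (not_not.1 hq) hz
      have h2 := not_lt.1 hr'
      have h3 : δ ^ 2 * (z ⬝ᵥ z) ≤ δ ^ 2 * (1.2 * (r ⬝ᵥ r)) := by linarith
      exact le_of_mul_le_mul_left h3 (by positivity)
    simp [hs, hPs]
  have hcardF : F.card = n.choose c := by simp [hF]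
  have h1 := (Finset.card_le_card hcover).trans ((Finset.card_union_le _ _).trans
    (Nat.add_le_add_left (Finset.card_union_le _ _) _))
  rw [hcardF] at h1
  have h2 : (n.choose c : ℝ) ≤ (F.filter P).card + ((F.filter Q).card + (F.filter R).card) := by
    exact_mod_cast h1
  linarith

theorem vnorm_nonneg {m : ℕ} (v : Fin m → ℝ) : 0 ≤ vnorm v := Real.sqrt_nonneg _

theorem vnorm_sq {m : ℕ} (v : Fin m → ℝ) : vnorm v ^ 2 = v ⬝ᵥ v := by
  rw [vnorm, Real.sq_sqrt (Finset.sum_nonneg fun i _ => sq_nonneg _), dotProduct]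
  exact Finset.sum_congr rfl fun i _ => pow_two _

theorem vnorm_eq_zero {m : ℕ} {v : Fin m → ℝ} : vnorm v = 0 ↔ v = 0 := by
  rw [← sq_eq_zero_iff, vnorm_sq, dotProduct_self_eq_zero]

theorem vnorm_smul {m : ℕ} {r : ℝ} (hr : 0 ≤ r) (v : Fin m → ℝ) :
    vnorm (r • v) = r * vnorm v := by
  rw [← sq_eq_sq₀ (vnorm_nonneg _) (mul_nonneg hr (vnorm_nonneg _)), mul_pow, vnorm_sq, vnorm_sq,
    smul_dotProduct, dotProduct_smul, smul_eq_mul, smul_eq_mul]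
  ring

theorem exists_vnorm_mulVec_le {n d : ℕ} (X : Matrix (Fin n) (Fin d) ℝ) :
    ∃ K : ℝ, 0 < K ∧ ∀ v, vnorm (X *ᵥ v) ≤ K * vnorm v := by
  have h0 : 0 ≤ ∑ i, X i ⬝ᵥ X i :=
    Finset.sum_nonneg fun i _ => Finset.sum_nonneg fun j _ => mul_self_nonneg _
  refine ⟨Real.sqrt (∑ i, X i ⬝ᵥ X i + 1), Real.sqrt_pos.2 (by linarith), fun v => ?_⟩
  refine le_of_sq_le_sq ?_ (mul_nonneg (Real.sqrt_nonneg _) (vnorm_nonneg _))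
  have hv : 0 ≤ v ⬝ᵥ v := Finset.sum_nonneg fun j _ => mul_self_nonneg _
  rw [mul_pow, Real.sq_sqrt (by linarith), vnorm_sq, vnorm_sq]
  calc (X *ᵥ v) ⬝ᵥ (X *ᵥ v) ≤ ∑ i, (X i ⬝ᵥ X i) * (v ⬝ᵥ v) := by
        refine Finset.sum_le_sum fun i _ => ?_
        have := Finset.sum_mul_sq_le_sq_mul_sq Finset.univ (X i) v
        simpa [dotProduct, pow_two, Matrix.mulVec] using this
    _ ≤ _ := by rw [← Finset.sum_mul]; gcongr; linarith

theorem vnorm_inv_smul_self {m : ℕ} {v : Fin m → ℝ} (hv : v ≠ 0) :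
    vnorm ((vnorm v)⁻¹ • v) = 1 := by
  rw [vnorm_smul (inv_nonneg.2 (vnorm_nonneg v)), inv_mul_cancel₀ (vnorm_eq_zero.not.2 hv)]

theorem vnorm_mulVec_inv_smul {n d : ℕ} (X : Matrix (Fin n) (Fin d) ℝ) (v : Fin d → ℝ) :
    vnorm (X *ᵥ ((vnorm v)⁻¹ • v)) = (vnorm v)⁻¹ * vnorm (X *ᵥ v) := by
  rw [Matrix.mulVec_smul, vnorm_smul (inv_nonneg.2 (vnorm_nonneg v))]

theorem sigmaMin_mul_vnorm_le {n d : ℕ} (X : Matrix (Fin n) (Fin d) ℝ) (v : Fin d → ℝ) :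
    sigmaMin X * vnorm v ≤ vnorm (X *ᵥ v) := by
  by_cases hv : v = 0
  · rw [vnorm_eq_zero.2 hv, mul_zero]; exact vnorm_nonneg _
  have hpos : 0 < vnorm v := lt_of_le_of_ne (vnorm_nonneg v) (Ne.symm (vnorm_eq_zero.not.2 hv))
  have h : sigmaMin X ≤ vnorm (X *ᵥ ((vnorm v)⁻¹ • v)) := by
    refine csInf_le ⟨0, ?_⟩ ⟨_, vnorm_inv_smul_self hv, rfl⟩
    rintro r ⟨w, -, rfl⟩
    exact vnorm_nonneg _
  rw [vnorm_mulVec_inv_smul, inv_mul_eq_div, le_div_iff₀ hpos] at h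
  exact h

theorem vnorm_mulVec_le_sigmaMax_mul {n d : ℕ} (X : Matrix (Fin n) (Fin d) ℝ) (v : Fin d → ℝ) :
    vnorm (X *ᵥ v) ≤ sigmaMax X * vnorm v := by
  by_cases hv : v = 0
  · simp [hv, vnorm]
  have hpos : 0 < vnorm v := lt_of_le_of_ne (vnorm_nonneg v) (Ne.symm (vnorm_eq_zero.not.2 hv))
  obtain ⟨K, -, hK⟩ := exists_vnorm_mulVec_le X
  have h : vnorm (X *ᵥ ((vnorm v)⁻¹ • v)) ≤ sigmaMax X := by
    refine le_csSup ⟨K, ?_⟩ ⟨_, vnorm_inv_smul_self hv, rfl⟩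
    rintro r ⟨w, hw, rfl⟩
    simpa [hw] using hK w
  rw [vnorm_mulVec_inv_smul, inv_mul_eq_div, div_le_iff₀ hpos] at h
  exact h

theorem sigmaMin_pos {n d : ℕ} (hd : 1 ≤ d) {X : Matrix (Fin n) (Fin d) ℝ}
    {G : Matrix (Fin d) (Fin n) ℝ} (hG : G * X = 1) : 0 < sigmaMin X := by
  obtain ⟨K, hK0, hK⟩ := exists_vnorm_mulVec_le G
  refine lt_of_lt_of_le (inv_pos.2 hK0) (le_csInf ?_ ?_)
  · have hne : (Pi.single ⟨0, hd⟩ 1 : Fin d → ℝ) ≠ 0 := by simp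
    exact ⟨_, _, vnorm_inv_smul_self hne, rfl⟩
  · rintro r ⟨v, hv, rfl⟩
    have := hK (X *ᵥ v)
    rw [Matrix.mulVec_mulVec, hG, Matrix.one_mulVec, hv] at this
    rwa [inv_le_iff_one_le_mul₀' hK0]

theorem isUnit_transpose_mul_self_of_rank_eq {n d : ℕ} {X : Matrix (Fin n) (Fin d) ℝ}
    (hrank : X.rank = d) : IsUnit (Xᵀ * X).det := by
  rw [← Matrix.isUnit_iff_isUnit_det, ← Matrix.mulVec_injective_iff_isUnit]
  have hr : (Xᵀ * X).rank = d := by rw [Matrix.rank_transpose_mul_self, hrank]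
  have hsurj : Function.Surjective (Xᵀ * X).mulVecLin := by
    rw [← LinearMap.range_eq_top]
    apply Submodule.eq_top_of_finrank_eq
    rw [← Matrix.rank, hr]; simp
  exact LinearMap.injective_iff_surjective.2 hsurj

/-- Two descriptions of the orthogonal projection onto the column space of a matrix. -/
theorem mul_transpose_eq_projection {n d : ℕ} {X U : Matrix (Fin n) (Fin d) ℝ}
    (hX : IsUnit (Xᵀ * X).det) (hU : Uᵀ * U = 1)
    (hcol : LinearMap.range U.mulVecLin = LinearMap.range X.mulVecLin) :
    U * Uᵀ = X * (Xᵀ * X)⁻¹ * Xᵀ := by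
  obtain ⟨H, hH⟩ : ∃ H, H = X * (Xᵀ * X)⁻¹ * Xᵀ := ⟨_, rfl⟩
  have hHX : H * X = X := by
    rw [hH, Matrix.mul_assoc, Matrix.mul_assoc, Matrix.nonsing_inv_mul _ hX, Matrix.mul_one]
  have hUX : U * Uᵀ * X = X := by
    refine Matrix.ext_iff_mulVec.2 fun v => ?_
    obtain ⟨w, hw⟩ : X *ᵥ v ∈ LinearMap.range U.mulVecLin := hcol ▸ ⟨v, rfl⟩
    rw [Matrix.mulVecLin_apply] at hw
    rw [← Matrix.mulVec_mulVec, ← hw, Matrix.mulVec_mulVec, Matrix.mul_assoc, hU, Matrix.mul_one]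
  have hHU : H * U = U := by
    refine Matrix.ext_iff_mulVec.2 fun v => ?_
    obtain ⟨w, hw⟩ : U *ᵥ v ∈ LinearMap.range X.mulVecLin := hcol ▸ ⟨v, rfl⟩
    rw [Matrix.mulVecLin_apply] at hw
    rw [← Matrix.mulVec_mulVec, ← hw, Matrix.mulVec_mulVec, hHX]
  have hHt : Hᵀ = H := by
    rw [hH, Matrix.transpose_mul, Matrix.transpose_mul, Matrix.transpose_nonsing_inv,
      Matrix.transpose_mul, Matrix.transpose_transpose, Matrix.mul_assoc]
  have h1 : U * Uᵀ * H = H := by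
    rw [hH, ← Matrix.mul_assoc, ← Matrix.mul_assoc, hUX]
  have h2 := congrArg Matrix.transpose h1
  rw [Matrix.transpose_mul, hHt, Matrix.transpose_mul, Matrix.transpose_transpose,
    ← Matrix.mul_assoc, hHU] at h2
  rw [h2, hH]

theorem vnorm_add_sq_of_dotProduct_eq_zero {m : ℕ} {a b : Fin m → ℝ} (h : a ⬝ᵥ b = 0) :
    vnorm (a + b) ^ 2 = vnorm a ^ 2 + vnorm b ^ 2 := by
  rw [vnorm_sq, vnorm_sq, vnorm_sq, add_dotProduct, dotProduct_add, dotProduct_add,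
    dotProduct_comm b a, h]
  ring

theorem vnorm_neg {m : ℕ} (v : Fin m → ℝ) : vnorm (-v) = vnorm v := by
  simp [vnorm]

/-- The deterministic part: a bound on the prediction error of `βt` relative to the least-squares
solution `β` implies the error bounds for the objective and for the regression coefficients. -/
theorem error_bounds_of_vnorm_mulVec_le {n d : ℕ} (hd : 1 ≤ d) {X : Matrix (Fin n) (Fin d) ℝ}
    {G : Matrix (Fin d) (Fin n) ℝ} (hG : G * X = 1) {y : Fin n → ℝ} {β βt : Fin d → ℝ}
    (horth : ∀ v, (X *ᵥ v) ⬝ᵥ (y - X *ᵥ β) = 0)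
    (hle : vnorm (X *ᵥ (βt - β)) ^ 2 ≤ 1.2 * vnorm (y - X *ᵥ β) ^ 2) :
    vnorm (y - X *ᵥ βt) ^ 2 ≤ 2.2 * vnorm (y - X *ᵥ β) ^ 2 ∧
      vnorm (β - βt) ^ 2 ≤ 1.2 / sigmaMin X ^ 2 * vnorm (y - X *ᵥ β) ^ 2 ∧
      ∀ γ : ℝ, 0 < γ → γ ≤ 1 → γ * vnorm y ≤ vnorm (X *ᵥ β) →
        vnorm (β - βt) ^ 2
          ≤ 1.2 * (sigmaMax X / sigmaMin X) ^ 2 * (γ⁻¹ ^ 2 - 1) * vnorm β ^ 2 := by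
  obtain ⟨r, hr⟩ : ∃ r, r = y - X *ᵥ β := ⟨_, rfl⟩
  rw [← hr] at horth hle ⊢
  have hσ := sigmaMin_pos hd hG
  have hsecond : vnorm (β - βt) ^ 2 ≤ 1.2 / sigmaMin X ^ 2 * vnorm r ^ 2 := by
    have h1 := pow_le_pow_left₀ (mul_nonneg hσ.le (vnorm_nonneg _))
      (sigmaMin_mul_vnorm_le X (βt - β)) 2
    rw [← neg_sub βt β, vnorm_neg, div_mul_eq_mul_div, le_div_iff₀ (by positivity)]
    rw [mul_pow] at h1
    linarith
  refine ⟨?_, hsecond, fun γ hγ hγ1 hγy => ?_⟩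
  · have h1 : y - X *ᵥ βt = X *ᵥ (β - βt) + r := by
      rw [hr, Matrix.mulVec_sub]; abel
    rw [h1, vnorm_add_sq_of_dotProduct_eq_zero (horth _), ← neg_sub βt β, Matrix.mulVec_neg,
      vnorm_neg]
    linarith
  · have h1 : vnorm y ^ 2 = vnorm (X *ᵥ β) ^ 2 + vnorm r ^ 2 := by
      rw [← vnorm_add_sq_of_dotProduct_eq_zero (horth _), hr, add_sub_cancel]
    have h2 : vnorm y ^ 2 ≤ γ⁻¹ ^ 2 * vnorm (X *ᵥ β) ^ 2 := by
      rw [← mul_pow]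
      refine pow_le_pow_left₀ (vnorm_nonneg _) ?_ 2
      rw [inv_mul_eq_div, le_div_iff₀ hγ]
      linarith
    have h3 : vnorm r ^ 2 ≤ (γ⁻¹ ^ 2 - 1) * vnorm (X *ᵥ β) ^ 2 := by linarith
    have h4 := pow_le_pow_left₀ (vnorm_nonneg _) (vnorm_mulVec_le_sigmaMax_mul X β) 2
    have h5 : 0 ≤ γ⁻¹ ^ 2 - 1 := sub_nonneg.2 (one_le_pow₀ ((one_le_inv₀ hγ).2 hγ1))
    calc vnorm (β - βt) ^ 2 ≤ 1.2 / sigmaMin X ^ 2 * vnorm r ^ 2 := hsecond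
      _ ≤ 1.2 / sigmaMin X ^ 2 * ((γ⁻¹ ^ 2 - 1) * (sigmaMax X * vnorm β) ^ 2) := by
        gcongr
        exact h3.trans (mul_le_mul_of_nonneg_left h4 h5)
      _ = _ := by rw [mul_pow, div_pow]; ring

/-- Error bound for uniform-sampling based least-squares regression: if
`1000 μ d (ln d + 7) ≤ c ≤ n`, then with probability at least `0.05` over a uniform
random `c`-subset `C` of the rows, every minimizer `β̃` of `β ↦ Σ_{i∈C}(y_i − x^(i)β)²`
satisfies `‖y − Xβ̃‖² ≤ 2.2‖y − Xβ_lsr‖²` and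
`‖β_lsr − β̃‖² ≤ (1.2/σ_min²(X))‖y − Xβ_lsr‖²`, and moreover, if `γ ∈ (0,1]` satisfies
`‖UUᵀy‖ ≥ γ‖y‖`, also `‖β_lsr − β̃‖² ≤ 1.2 κ²(X)(γ⁻² − 1)‖β_lsr‖²`. -/
theorem stmt_12 {n d : ℕ} (hd : 2 ≤ d) (hdn : d ≤ n)
    (X : Matrix (Fin n) (Fin d) ℝ) (hrank : X.rank = d)
    (y : Fin n → ℝ)
    (U : Matrix (Fin n) (Fin d) ℝ) (hU : Uᵀ * U = 1)
    (hcol : LinearMap.range U.mulVecLin = LinearMap.range X.mulVecLin)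
    (βlsr : Fin d → ℝ) (hβ : βlsr = ((Xᵀ * X)⁻¹ * Xᵀ).mulVec y)
    (μ : ℝ) (hμ : μ = ((n : ℝ) / d) * ⨆ i : Fin n, (X * (Xᵀ * X)⁻¹ * Xᵀ) i i)
    (c : ℕ) (hc : 1000 * μ * d * (Real.log d + 7) ≤ c) (hcn : c ≤ n)
    (obj : Finset (Fin n) → (Fin d → ℝ) → ℝ)
    (hobj : obj = fun s β => ∑ i ∈ s, (y i - ∑ j, X i j * β j) ^ 2) :
    (0.05 : ℝ) ≤
      (((Finset.univ : Finset (Fin n)).powersetCard c).filter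
            (fun s => ∀ βt : Fin d → ℝ, (∀ β, obj s βt ≤ obj s β) →
              vnorm (y - X.mulVec βt) ^ 2 ≤ 2.2 * vnorm (y - X.mulVec βlsr) ^ 2 ∧
              vnorm (βlsr - βt) ^ 2
                ≤ 1.2 / sigmaMin X ^ 2 * vnorm (y - X.mulVec βlsr) ^ 2 ∧
              ∀ γ : ℝ, 0 < γ → γ ≤ 1 → γ * vnorm y ≤ vnorm ((U * Uᵀ).mulVec y) →
                vnorm (βlsr - βt) ^ 2
                  ≤ 1.2 * (sigmaMax X / sigmaMin X) ^ 2 * (γ⁻¹ ^ 2 - 1)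
                      * vnorm βlsr ^ 2)).card
        / (n.choose c : ℝ) := by
  have hX := isUnit_transpose_mul_self_of_rank_eq hrank
  have hproj := mul_transpose_eq_projection hX hU hcol
  have hG : (Xᵀ * X)⁻¹ * Xᵀ * X = 1 := by
    rw [Matrix.mul_assoc, Matrix.nonsing_inv_mul _ hX]
  have hfit : X *ᵥ βlsr = (U * Uᵀ) *ᵥ y := by
    rw [hβ, Matrix.mulVec_mulVec, hproj, Matrix.mul_assoc]
  have hUX : U * Uᵀ * X = X := by
    rw [hproj, Matrix.mul_assoc, Matrix.mul_assoc, Matrix.nonsing_inv_mul _ hX, Matrix.mul_one]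
  obtain ⟨r, hr⟩ : ∃ r, r = y - X *ᵥ βlsr := ⟨_, rfl⟩
  have hUr : Uᵀ *ᵥ r = 0 := by
    rw [hr, Matrix.mulVec_sub, hfit, Matrix.mulVec_mulVec, ← Matrix.mul_assoc, hU, Matrix.one_mul,
      sub_self]
  have horth : ∀ v, (X *ᵥ v) ⬝ᵥ r = 0 := fun v => by
    rw [← hUX, Matrix.mul_assoc, ← Matrix.mulVec_mulVec, dotProduct_comm, Matrix.dotProduct_mulVec,
      ← Matrix.mulVec_transpose, hUr, zero_dotProduct]
  have hsum : ∑ i, r i • U i = 0 := by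
    ext j
    have := congrFun hUr j
    simpa [Matrix.mulVec, dotProduct, mul_comm, Finset.sum_apply] using this
  have hlev : ∀ i, U i ⬝ᵥ U i = (X * (Xᵀ * X)⁻¹ * Xᵀ) i i := fun i => by
    rw [← hproj]; rfl
  obtain ⟨L, hL⟩ : ∃ L, L = ⨆ i : Fin n, (X * (Xᵀ * X)⁻¹ * Xᵀ) i i := ⟨_, rfl⟩
  have hle : ∀ i, U i ⬝ᵥ U i ≤ L := fun i => by
    rw [hlev, hL]
    exact le_ciSup (f := fun i => (X * (Xᵀ * X)⁻¹ * Xᵀ) i i) (Set.finite_range _).bddAbove i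
  have hdpos : (0 : ℝ) < d := by exact_mod_cast (by omega : 0 < d)
  have hnL : 1 ≤ n * L := by
    have htr : ∑ i, U i ⬝ᵥ U i = d := by
      have h1 : ∑ i, U i ⬝ᵥ U i = Matrix.trace (U * Uᵀ) := rfl
      rw [h1, Matrix.trace_mul_comm, hU, Matrix.trace_one, Fintype.card_fin]
    have h2 : ∑ i, U i ⬝ᵥ U i ≤ n * L := by
      refine (Finset.sum_le_sum fun i _ => hle i).trans_eq ?_
      simp
    have h3 : (1 : ℝ) ≤ d := by exact_mod_cast (by omega : 1 ≤ d)
    linarith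
  have hc' : 1000 * (n * L) * (Real.log d + 7) ≤ c := by
    have : 1000 * μ * d = 1000 * (n * L) := by
      rw [hμ, ← hL]; field_simp
    rwa [this] at hc
  have hchoose : (0 : ℝ) < n.choose c := by exact_mod_cast Nat.choose_pos hcn
  rw [le_div_iff₀ hchoose]
  refine le_trans (mul_le_mul_of_nonneg_right (by norm_num) hchoose.le)
    (half_le_card_filter_sampled_error (by omega) hU hle hnL hsum hc' hcn _ fun s _ hs βt hβt => ?_)
  have hUz : U *ᵥ (Uᵀ *ᵥ (X *ᵥ (βt - βlsr))) = X *ᵥ (βt - βlsr) := by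
    rw [Matrix.mulVec_mulVec, Matrix.mulVec_mulVec, hUX]
  have hbound := hs (Uᵀ *ᵥ (X *ᵥ (βt - βlsr))) <| by
    have h1 := hβt βlsr
    rw [hobj] at h1
    have h2 : ∀ i, r i - U i ⬝ᵥ (Uᵀ *ᵥ (X *ᵥ (βt - βlsr))) = y i - ∑ j, X i j * βt j :=
      fun i => by
        have h3 := congrFun hUz i
        have h4 : X *ᵥ (βt - βlsr) = X *ᵥ βt - X *ᵥ βlsr := Matrix.mulVec_sub _ _ _
        have h5 : U i ⬝ᵥ (Uᵀ *ᵥ (X *ᵥ (βt - βlsr))) = (X *ᵥ βt) i - (X *ᵥ βlsr) i :=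
          h3.trans (congrFun h4 i)
        rw [h5, hr, Pi.sub_apply, sub_sub_sub_cancel_right]
        rfl
    simp only [h2]
    refine h1.trans_eq (Finset.sum_congr rfl fun i _ => ?_)
    rw [hr]; rfl
  have hzz : (Uᵀ *ᵥ (X *ᵥ (βt - βlsr))) ⬝ᵥ (Uᵀ *ᵥ (X *ᵥ (βt - βlsr)))
      = vnorm (X *ᵥ (βt - βlsr)) ^ 2 := by
    rw [vnorm_sq, Matrix.dotProduct_mulVec, Matrix.vecMul_transpose, hUz]
  rw [hzz, ← vnorm_sq, hr] at hbound
  rw [hr] at horth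
  rw [← hfit]
  exact error_bounds_of_vnorm_mulVec_le (by omega) hG horth hbound
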